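/- Let m be a positive integer. Let g : ℍ × ℂ → ℂ be a Jacobi form of weight 0 and index m, i.e. a holomorphic function satisfying (i) g((aτ+b)/(cτ+d), z/(cτ+d)) = e(mcz²/(cτ+d))·g(τ,z) for all [[a,b],[c,d]] ∈ SL₂(ℤ), (ii) g(τ, z+λτ+μ) = e(−mλ²τ − 2mλz)·g(τ,z) for all λ, μ ∈ ℤ, and (iii) g has a Fourier expansion g(τ,z) = Σ c(n,r) qⁿζʳ over (n,r) ∈ ℤ², converging absolutely and locally uniformly on ℍ × ℂ, with c(n,r) = 0 whenever 4nm − r² < 0. Then g is identically zero. -/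

import Mathlib

open Complex

/-!
Write `v = Im τ`, `y = Im z`. The function `‖g(τ, z)‖ exp (-2πm y² / v)` is invariant under the
whole Jacobi group. On `{v ≥ 1/2, 0 ≤ y ≤ v}`, which meets every orbit, it is bounded: since
`r² ≤ 4nm`, each term of the Fourier series is dominated by its values at two points. Hence
`‖g(τ, x)‖ ≤ C` for all `τ ∈ ℍ` and all *real* `x`, and Bessel's inequality in `(Re τ, x)` gives
`∑ ‖c(n, r)‖² exp (-4πn v) ≤ C²`; letting `v → 0`, the sequence `c` is square summable. But the
elliptic law makes `c` constant along the infinite orbit `l ↦ (n + rl + ml², r + 2ml)`, so `c = 0`.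
-/

open UpperHalfPlane hiding I
open scoped MatrixGroups

section TorusFourier

open MeasureTheory UnitAddTorus

/-- The measure on `ℝ / ℤ` normalised to total volume 1, which Mathlib's Fourier theory on
`UnitAddTorus` uses through an instance that is local to its own file. -/
noncomputable local instance : MeasureSpace UnitAddCircle := ⟨AddCircle.haarAddCircle⟩

local instance : IsProbabilityMeasure (volume : Measure UnitAddCircle) :=
  inferInstanceAs (IsProbabilityMeasure AddCircle.haarAddCircle)

variable {d : Type*} [Fintype d]

lemma mFourierCoeff_eq_of_hasSum {a : (d → ℤ) → ℂ} {f : C(UnitAddTorus d, ℂ)}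
    (hf : HasSum (fun n ↦ a n • mFourier n) f) (n : d → ℤ) : mFourierCoeff f n = a n := by
  classical
  have hL2 : HasSum (fun k ↦ a k • mFourierLp 2 k) (f.toLp 2 volume ℂ) := by
    simpa only [map_smul] using (ContinuousMap.toLp 2 volume ℂ).hasSum hf
  have hinner := (innerSL ℂ (mFourierLp 2 n)).hasSum hL2
  simp only [innerSL_apply_apply, inner_smul_right, orthonormal_iff_ite.mp orthonormal_mFourier,
    mul_ite, mul_one, mul_zero] at hinner
  rw [← mFourierCoeff_toLp, ← mFourierBasis_repr, HilbertBasis.repr_apply_apply,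
    coe_mFourierBasis]
  exact (hinner.unique (hasSum_single n fun k hk ↦ if_neg hk.symm)).trans (if_pos rfl)

lemma sum_sq_norm_mFourierCoeff_le {f : C(UnitAddTorus d, ℂ)} {C : ℝ} (hf : ∀ t, ‖f t‖ ≤ C)
    (S : Finset (d → ℤ)) : ∑ n ∈ S, ‖mFourierCoeff f n‖ ^ 2 ≤ C ^ 2 := by
  have hparseval := hasSum_sq_mFourierCoeff (f.toLp 2 volume ℂ)
  simp only [mFourierCoeff_toLp] at hparseval
  refine (sum_le_hasSum S (fun _ _ ↦ sq_nonneg _) hparseval).trans ?_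
  calc ∫ t, ‖f.toLp 2 volume ℂ t‖ ^ 2
      ≤ ∫ _ : UnitAddTorus d, C ^ 2 := by
        refine integral_mono_of_nonneg (.of_forall fun _ ↦ sq_nonneg _) (integrable_const _) ?_
        filter_upwards [ContinuousMap.coeFn_toLp (p := 2) (𝕜 := ℂ) volume f] with t ht
        rw [ht]
        gcongr
        exact hf t
    _ = C ^ 2 := by simp

lemma exists_real_coe_eq_torus (t : UnitAddTorus (Fin 2)) :
    ∃ u x : ℝ, t = ![(u : UnitAddCircle), (x : UnitAddCircle)] := by
  obtain ⟨u, hu⟩ := QuotientAddGroup.mk_surjective (t 0)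
  obtain ⟨x, hx⟩ := QuotientAddGroup.mk_surjective (t 1)
  refine ⟨u, x, ?_⟩
  ext i
  fin_cases i
  exacts [hu.symm, hx.symm]

end TorusFourier

section FourierMonomial

/-- The monomial `qⁿ ζʳ` with exponent `p = (n, r)`, where `q = exp (2πiτ)`, `ζ = exp (2πiz)`. -/
noncomputable def fourierMonomial (p : ℤ × ℤ) (τ z : ℂ) : ℂ :=
  exp (2 * Real.pi * I * (p.1 * τ + p.2 * z))

lemma continuous_fourierMonomial_left (p : ℤ × ℤ) (z : ℂ) :
    Continuous fun τ ↦ fourierMonomial p τ z := by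
  unfold fourierMonomial
  fun_prop

lemma fourierMonomial_ne_zero (p : ℤ × ℤ) (τ z : ℂ) : fourierMonomial p τ z ≠ 0 :=
  exp_ne_zero _

lemma fourierMonomial_zero_zero (p : ℤ × ℤ) : fourierMonomial p 0 0 = 1 := by
  simp [fourierMonomial]

lemma fourierMonomial_add (p q : ℤ × ℤ) (τ z : ℂ) :
    fourierMonomial (p + q) τ z = fourierMonomial p τ z * fourierMonomial q τ z := by
  rw [fourierMonomial, fourierMonomial, fourierMonomial, ← exp_add, Prod.fst_add, Prod.snd_add]
  push_cast
  ring_nf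

lemma fourierMonomial_add_add (p : ℤ × ℤ) (τ τ' z z' : ℂ) :
    fourierMonomial p (τ + τ') (z + z') = fourierMonomial p τ z * fourierMonomial p τ' z' := by
  rw [fourierMonomial, fourierMonomial, fourierMonomial, ← exp_add]
  ring_nf

lemma fourierMonomial_add_int_mul (p : ℤ × ℤ) (l : ℤ) (τ z : ℂ) :
    fourierMonomial p τ (z + l * τ) = fourierMonomial (p.1 + l * p.2, p.2) τ z := by
  rw [fourierMonomial, fourierMonomial]
  push_cast
  ring_nf

lemma norm_exp_two_pi_I_mul (w : ℂ) :
    ‖exp (2 * Real.pi * I * w)‖ = Real.exp (-(2 * Real.pi * w.im)) := by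
  simp [norm_exp]

lemma norm_fourierMonomial (p : ℤ × ℤ) (τ z : ℂ) :
    ‖fourierMonomial p τ z‖ = Real.exp (-(2 * Real.pi * (p.1 * τ.im + p.2 * z.im))) := by
  simp [fourierMonomial, norm_exp_two_pi_I_mul]

lemma mFourier_coe_eq_fourierMonomial (p : ℤ × ℤ) (u x : ℝ) :
    UnitAddTorus.mFourier ![p.1, p.2] ![(u : UnitAddCircle), (x : UnitAddCircle)] =
      fourierMonomial p u x := by
  simp only [UnitAddTorus.mFourier, ContinuousMap.coe_mk, Fin.prod_univ_two, Matrix.cons_val_zero,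
    Matrix.cons_val_one, fourier_coe_apply, fourierMonomial, ← exp_add]
  congr 1
  push_cast
  ring

end FourierMonomial

section FourierExpansion

/-- `g(τ, z) = ∑ c(n, r) qⁿ ζʳ` on `ℍ × ℂ`. Convergence is unconditional, hence absolute. -/
def HasFourierExpansion (g : ℍ → ℂ → ℂ) (c : ℤ × ℤ → ℂ) : Prop :=
  ∀ (τ : ℍ) (z : ℂ), HasSum (fun p ↦ c p * fourierMonomial p τ z) (g τ z)

namespace HasFourierExpansion

open UnitAddTorus

variable {g : ℍ → ℂ → ℂ} {c : ℤ × ℤ → ℂ}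

lemma exists_mFourierCoeff_eq (hg : HasFourierExpansion g c) (τ : ℍ) (z : ℂ) :
    ∃ f : C(UnitAddTorus (Fin 2), ℂ),
      (∀ u x : ℝ, f ![(u : UnitAddCircle), (x : UnitAddCircle)] = g (u +ᵥ τ) (z + x)) ∧
      ∀ p : ℤ × ℤ, mFourierCoeff f ![p.1, p.2] = c p * fourierMonomial p τ z := by
  let e : (Fin 2 → ℤ) ≃ ℤ × ℤ := finTwoArrowEquiv ℤ
  let a : (Fin 2 → ℤ) → ℂ := fun n ↦ c (e n) * fourierMonomial (e n) τ z
  have hsummable : Summable fun n ↦ a n • mFourier n := by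
    refine .of_norm ?_
    simpa only [norm_smul, mFourier_norm, mul_one] using!
      e.summable_iff.mpr (hg τ z).summable.norm
  obtain ⟨f, hf⟩ := hsummable
  refine ⟨f, fun u x ↦ ?_, fun p ↦ mFourierCoeff_eq_of_hasSum hf ![p.1, p.2]⟩
  have hterm (p : ℤ × ℤ) : (a (e.symm p) • mFourier (e.symm p))
      ![(u : UnitAddCircle), (x : UnitAddCircle)] =
        c p * fourierMonomial p ↑(u +ᵥ τ) (z + x) := by
    have hmFourier := mFourier_coe_eq_fourierMonomial p u x
    rw [coe_vadd, add_comm (u : ℂ), fourierMonomial_add_add, ← hmFourier, ← mul_assoc]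
    rfl
  have hpoint := (ContinuousMap.evalCLM ℂ
    ![(u : UnitAddCircle), (x : UnitAddCircle)]).hasSum (e.symm.hasSum_iff.mpr hf)
  exact (hpoint.congr_fun fun p ↦ (hterm p).symm).unique (hg _ _)

theorem unique {c' : ℤ × ℤ → ℂ} (hc : HasFourierExpansion g c) (hc' : HasFourierExpansion g c') :
    c = c' := by
  obtain ⟨f, hf, hcoeff⟩ := hc.exists_mFourierCoeff_eq UpperHalfPlane.I 0
  obtain ⟨f', hf', hcoeff'⟩ := hc'.exists_mFourierCoeff_eq UpperHalfPlane.I 0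
  have hff' : f = f' := by
    ext t
    obtain ⟨u, x, rfl⟩ := exists_real_coe_eq_torus t
    rw [hf, hf']
  ext p
  apply mul_right_cancel₀ (fourierMonomial_ne_zero p UpperHalfPlane.I 0)
  rw [← hcoeff, ← hcoeff', hff']

lemma fourierMonomial_mul (hg : HasFourierExpansion g c) (k : ℤ × ℤ) :
    HasFourierExpansion (fun τ z ↦ fourierMonomial k τ z * g τ z) (fun p ↦ c (p - k)) := by
  intro τ z
  refine ((Equiv.subRight k).hasSum_iff.mpr ((hg τ z).mul_left (fourierMonomial k τ z))).congr_fun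
    fun p ↦ ?_
  rw [Function.comp_apply, Equiv.subRight_apply, mul_left_comm, ← fourierMonomial_add,
    add_sub_cancel]

lemma comp_add_int_mul (hg : HasFourierExpansion g c) (l : ℤ) :
    HasFourierExpansion (fun τ z ↦ g τ (z + l * τ)) (fun p ↦ c (p.1 - l * p.2, p.2)) := by
  let shear : ℤ × ℤ ≃ ℤ × ℤ :=
    { toFun := fun p ↦ (p.1 - l * p.2, p.2)
      invFun := fun p ↦ (p.1 + l * p.2, p.2)
      left_inv := fun p ↦ by simp
      right_inv := fun p ↦ by simp }
  intro τ z
  refine (shear.hasSum_iff.mpr (hg τ (z + l * τ))).congr_fun fun p ↦ ?_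
  simp [shear, fourierMonomial_add_int_mul]

lemma sum_sq_norm_le (hg : HasFourierExpansion g c) {τ : ℍ} {z : ℂ} {C : ℝ}
    (hC : ∀ u x : ℝ, ‖g (u +ᵥ τ) (z + x)‖ ≤ C) (S : Finset (ℤ × ℤ)) :
    ∑ p ∈ S, ‖c p * fourierMonomial p τ z‖ ^ 2 ≤ C ^ 2 := by
  obtain ⟨f, hf, hcoeff⟩ := hg.exists_mFourierCoeff_eq τ z
  have hfC (t) : ‖f t‖ ≤ C := by
    obtain ⟨u, x, rfl⟩ := exists_real_coe_eq_torus t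
    exact hf u x ▸ hC u x
  have hbessel := sum_sq_norm_mFourierCoeff_le hfC
    (S.map (finTwoArrowEquiv ℤ).symm.toEmbedding)
  rw [Finset.sum_map] at hbessel
  simpa only [← hcoeff] using! hbessel

theorem summable_sq_norm (hg : HasFourierExpansion g c) {C : ℝ}
    (hC : ∀ (τ : ℍ) (x : ℝ), ‖g τ x‖ ≤ C) : Summable fun p ↦ ‖c p‖ ^ 2 := by
  refine summable_of_sum_le (c := C ^ 2) (fun _ ↦ sq_nonneg _) fun S ↦ ?_
  have hbound (v : ℝ) (hv : 0 < v) :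
      ∑ p ∈ S, ‖c p * fourierMonomial p (v * I) 0‖ ^ 2 ≤ C ^ 2 :=
    hg.sum_sq_norm_le (τ := ⟨v * I, by simpa⟩) (fun u x ↦ by simpa using hC _ x) S
  have hcont : Continuous fun v : ℝ ↦ ∑ p ∈ S, ‖c p * fourierMonomial p (v * I) 0‖ ^ 2 := by
    have (p : ℤ × ℤ) := continuous_fourierMonomial_left p 0
    fun_prop
  have hlim := (hcont.tendsto 0).mono_left (nhdsWithin_le_nhds (s := Set.Ioi 0))
  simpa [fourierMonomial_zero_zero] using
    le_of_tendsto hlim (Filter.eventually_of_mem self_mem_nhdsWithin hbound)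

end HasFourierExpansion

end FourierExpansion

section JacobiGroup

/-- The transformation law of weight `0` and index `m` under `SL(2, ℤ)`. -/
def SatisfiesModularLaw (m : ℤ) (g : ℍ → ℂ → ℂ) : Prop :=
  ∀ (γ : SL(2, ℤ)) (τ : ℍ) (z : ℂ), g (γ • τ) (z / denom γ τ) =
    exp (2 * Real.pi * I * (m * γ 1 0 * z ^ 2 / denom γ τ)) * g τ z

/-- The transformation law of index `m` under `z ↦ z + lτ`. The factor `exp (-2πim(l²τ + 2lz))` is
written as a monomial in `q` and `ζ`. Invariance under `z ↦ z + 1` is not part of the law, as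
every Fourier expansion has it. -/
def SatisfiesEllipticLaw (m : ℤ) (g : ℍ → ℂ → ℂ) : Prop :=
  ∀ (l : ℤ) (τ : ℍ) (z : ℂ),
    g τ (z + l * τ) = fourierMonomial (-(m * l ^ 2), -(2 * m * l)) τ z * g τ z

/-- The Petersson norm of weight `0` and index `m`: the absolute value of `g`, corrected to be
invariant under the Jacobi group. -/
noncomputable def peterssonNorm (m : ℤ) (g : ℍ → ℂ → ℂ) (τ : ℍ) (z : ℂ) : ℝ :=
  ‖g τ z‖ * Real.exp (-(2 * Real.pi * (m * z.im ^ 2 / τ.im)))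

variable {m : ℤ} {g : ℍ → ℂ → ℂ}

lemma peterssonNorm_ofReal (m : ℤ) (g : ℍ → ℂ → ℂ) (τ : ℍ) (x : ℝ) :
    peterssonNorm m g τ x = ‖g τ x‖ := by
  simp [peterssonNorm]

theorem SatisfiesEllipticLaw.peterssonNorm_add_int_mul (hg : SatisfiesEllipticLaw m g) (l : ℤ)
    (τ : ℍ) (z : ℂ) : peterssonNorm m g τ (z + l * τ) = peterssonNorm m g τ z := by
  have hv := τ.im_ne_zero
  rw [peterssonNorm, peterssonNorm, hg, norm_mul, norm_fourierMonomial, mul_comm (Real.exp _),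
    mul_assoc, ← Real.exp_add]
  congr 2
  simp only [Int.cast_neg, Int.cast_mul, Int.cast_pow, coe_im, neg_mul, Int.cast_ofNat, add_im,
    mul_im, intCast_re, intCast_im, coe_re, zero_mul, add_zero]
  field_simp
  ring

lemma im_sq_div_im_smul_add_im (γ : SL(2, ℤ)) (τ : ℍ) (z : ℂ) :
    (z / denom γ τ).im ^ 2 / (γ • τ).im + (γ 1 0 * z ^ 2 / denom γ τ).im = z.im ^ 2 / τ.im := by
  have hj : denom γ τ ≠ 0 := denom_ne_zero _ τ
  have hv := τ.im_ne_zero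
  have hjim : (denom γ τ).im = γ 1 0 * τ.im := by
    simp [ModularGroup.denom_apply]
  rw [ModularGroup.im_smul_eq_div_normSq]
  set j := denom γ τ
  obtain ⟨w, rfl⟩ : ∃ w, z = w * j := ⟨z / j, (div_mul_cancel₀ z hj).symm⟩
  have hw : (γ 1 0 * (w * j) ^ 2 / j : ℂ) = ((γ 1 0 : ℝ) : ℂ) * (w ^ 2 * j) := by
    push_cast
    field_simp
  rw [hw, im_ofReal_mul, mul_div_cancel_right₀ w hj, div_div_eq_mul_div, eq_div_iff hv, add_mul,
    div_mul_cancel₀ _ hv, mul_right_comm, ← hjim]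
  -- The identity is now `(Im w)² |j|² + Im j * Im (w² j) = (Im (w j))²`.
  simp only [pow_two, normSq_apply, mul_im, mul_re]
  ring

theorem SatisfiesModularLaw.peterssonNorm_smul (hg : SatisfiesModularLaw m g) (γ : SL(2, ℤ))
    (τ : ℍ) (z : ℂ) : peterssonNorm m g (γ • τ) (z / denom γ τ) = peterssonNorm m g τ z := by
  rw [peterssonNorm, peterssonNorm, hg, norm_mul, norm_exp_two_pi_I_mul, mul_comm (Real.exp _),
    mul_assoc, ← Real.exp_add]
  have him : (m * γ 1 0 * z ^ 2 / denom γ τ : ℂ).im = m * (γ 1 0 * z ^ 2 / denom γ τ).im := by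
    rw [mul_assoc, mul_div_assoc, ← ofReal_intCast m, im_ofReal_mul]
  rw [him, mul_div_assoc (m : ℝ), mul_div_assoc (m : ℝ), ← im_sq_div_im_smul_add_im γ τ z]
  ring_nf

lemma exists_int_im_sub_mul_mem_Ico (τ : ℍ) (z : ℂ) :
    ∃ l : ℤ, (z - l * τ).im ∈ Set.Ico 0 τ.im := by
  obtain ⟨l, hl, -⟩ := existsUnique_sub_zsmul_mem_Ico τ.im_pos z.im 0
  exact ⟨l, by simpa using hl⟩

end JacobiGroup

section Boundedness

variable {m : ℤ} {g : ℍ → ℂ → ℂ} {c : ℤ × ℤ → ℂ}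

lemma quadratic_nonneg_of_sq_le {m n r : ℝ} (hm : 0 < m) (hnr : r ^ 2 ≤ 4 * n * m) (a : ℝ) :
    0 ≤ n + r * a + m * a ^ 2 := by
  refine nonneg_of_mul_nonneg_right ?_ (by positivity : 0 < 4 * m)
  nlinarith [sq_nonneg (2 * m * a + r)]

lemma mul_min_le_of_sq_le {m n r v₀ v y : ℝ} (hm : 0 < m) (hnr : r ^ 2 ≤ 4 * n * m)
    (hv₀ : 0 < v₀) (hv : v₀ ≤ v) (hy₀ : 0 ≤ y) (hy : y ≤ v) :
    v₀ * min n (n + r) ≤ n * v + r * y + m * y ^ 2 / v := by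
  have hvpos : 0 < v := hv₀.trans_le hv
  obtain ⟨a, rfl⟩ : ∃ a, y = a * v := ⟨y / v, by field_simp⟩
  have ha₀ : 0 ≤ a := nonneg_of_mul_nonneg_left hy₀ hvpos
  have ha₁ : a ≤ 1 := (mul_le_iff_le_one_left hvpos).mp hy
  have hmin : min n (n + r) ≤ n + r * a := by
    rcases le_total 0 r with hr | hr
    · exact (min_le_left _ _).trans (le_add_of_nonneg_right (mul_nonneg hr ha₀))
    · exact (min_le_right _ _).trans (by linarith [mul_le_mul_of_nonpos_left ha₁ hr])
  calc v₀ * min n (n + r) ≤ v₀ * (n + r * a + m * a ^ 2) := by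
        gcongr
        exact hmin.trans (le_add_of_nonneg_right (by positivity))
    _ ≤ v * (n + r * a + m * a ^ 2) := by
        gcongr
        exact quadratic_nonneg_of_sq_le hm hnr a
    _ = n * v + r * (a * v) + m * (a * v) ^ 2 / v := by
        field_simp

lemma norm_fourierMonomial_mul_exp_le {n r : ℤ} {v₀ : ℝ} {τ z : ℂ} (hm : 0 < m)
    (hnr : r ^ 2 ≤ 4 * n * m) (hv₀ : 0 < v₀) (hτ : v₀ ≤ τ.im) (hz₀ : 0 ≤ z.im)
    (hz : z.im ≤ τ.im) :
    ‖fourierMonomial (n, r) τ z‖ * Real.exp (-(2 * Real.pi * (m * z.im ^ 2 / τ.im))) ≤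
      ‖fourierMonomial (n, r) (v₀ * I) 0‖ + ‖fourierMonomial (n, r) (v₀ * I) (v₀ * I)‖ := by
  have hexponent : v₀ * min (n : ℝ) (n + r) ≤
      n * τ.im + r * z.im + m * z.im ^ 2 / τ.im :=
    mul_min_le_of_sq_le (mod_cast hm) (mod_cast hnr) hv₀ hτ hz₀ hz
  have hdecay : ‖fourierMonomial (n, r) τ z‖ *
      Real.exp (-(2 * Real.pi * (m * z.im ^ 2 / τ.im))) ≤
        Real.exp (-(2 * Real.pi * (v₀ * min (n : ℝ) (n + r)))) := by
    rw [norm_fourierMonomial, ← Real.exp_add, ← neg_add, ← mul_add]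
    gcongr
  refine hdecay.trans ?_
  rw [norm_fourierMonomial, norm_fourierMonomial]
  rcases min_choice (n : ℝ) (n + r) with h | h <;> rw [h]
  · refine le_add_of_le_of_nonneg (le_of_eq ?_) (Real.exp_pos _).le
    simp [mul_comm]
  · refine le_add_of_nonneg_of_le (Real.exp_pos _).le (le_of_eq ?_)
    simp [mul_add, mul_comm]

lemma HasFourierExpansion.exists_peterssonNorm_le_of_im_le (hg : HasFourierExpansion g c)
    (hm : 0 < m) (hsupp : ∀ n r : ℤ, 4 * n * m - r ^ 2 < 0 → c (n, r) = 0) {v₀ : ℝ}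
    (hv₀ : 0 < v₀) : ∃ C : ℝ, ∀ (τ : ℍ) (z : ℂ), v₀ ≤ τ.im → 0 ≤ z.im → z.im ≤ τ.im →
      peterssonNorm m g τ z ≤ C := by
  let τ₀ : ℍ := ⟨v₀ * I, by simpa⟩
  have hmajorant := (hg τ₀ 0).summable.norm.add (hg τ₀ (v₀ * I)).summable.norm
  refine ⟨∑' p, (‖c p * fourierMonomial p τ₀ 0‖ + ‖c p * fourierMonomial p τ₀ (v₀ * I)‖),
    fun τ z hτ hz₀ hz ↦ ?_⟩
  have hseries := (hg τ z).mul_right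
    (Real.exp (-(2 * Real.pi * (m * z.im ^ 2 / τ.im))) : ℂ)
  have hnorm := hseries.norm_le_of_bounded hmajorant.hasSum ?_
  · rwa [norm_mul, norm_real, Real.norm_of_nonneg (Real.exp_pos _).le] at hnorm
  rintro ⟨n, r⟩
  rcases lt_or_ge (4 * n * m - r ^ 2) 0 with hneg | hnonneg
  · simp [hsupp n r hneg]
  rw [norm_mul, norm_mul, norm_mul, norm_mul, norm_real,
    Real.norm_of_nonneg (Real.exp_pos _).le, mul_assoc, ← mul_add]
  gcongr
  exact norm_fourierMonomial_mul_exp_le hm (sub_nonneg.mp hnonneg) hv₀ hτ hz₀ hz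

theorem HasFourierExpansion.exists_peterssonNorm_le (hg : HasFourierExpansion g c)
    (hmod : SatisfiesModularLaw m g) (hell : SatisfiesEllipticLaw m g) (hm : 0 < m)
    (hsupp : ∀ n r : ℤ, 4 * n * m - r ^ 2 < 0 → c (n, r) = 0) :
    ∃ C : ℝ, ∀ (τ : ℍ) (z : ℂ), peterssonNorm m g τ z ≤ C := by
  obtain ⟨C, hC⟩ := hg.exists_peterssonNorm_le_of_im_le hm hsupp one_half_pos
  refine ⟨C, fun τ z ↦ ?_⟩
  obtain ⟨γ, hγ⟩ := ModularGroup.exists_one_half_le_im_smul τ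
  obtain ⟨l, hl₀, hl⟩ := exists_int_im_sub_mul_mem_Ico (γ • τ) (z / denom γ τ)
  rw [← hmod.peterssonNorm_smul γ, ← sub_add_cancel (z / denom γ τ) (l * ↑(γ • τ)),
    hell.peterssonNorm_add_int_mul]
  exact hC _ _ hγ hl₀ hl.le

end Boundedness

section Vanishing

variable {m : ℤ} {g : ℍ → ℂ → ℂ} {c : ℤ × ℤ → ℂ}

theorem HasFourierExpansion.coeff_add_eq (hg : HasFourierExpansion g c)
    (hell : SatisfiesEllipticLaw m g) (n r l : ℤ) :
    c (n + r * l + m * l ^ 2, r + 2 * m * l) = c (n, r) := by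
  have hshear := hg.comp_add_int_mul l
  simp only [hell l] at hshear
  have hcoeff := congrFun ((hg.fourierMonomial_mul _).unique hshear) (n + r * l, r)
  simpa [mul_comm l r] using hcoeff

lemma injective_coeff_orbit (hm : m ≠ 0) (n r : ℤ) :
    Function.Injective fun l : ℤ ↦ (n + r * l + m * l ^ 2, r + 2 * m * l) := by
  intro l l' h
  simpa [hm] using congrArg Prod.snd h

theorem HasFourierExpansion.coeff_eq_zero (hg : HasFourierExpansion g c)
    (hell : SatisfiesEllipticLaw m g) (hm : m ≠ 0) (hc : Summable fun p ↦ ‖c p‖ ^ 2)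
    (p : ℤ × ℤ) : c p = 0 := by
  obtain ⟨n, r⟩ := p
  have horbit := hc.comp_injective (injective_coeff_orbit hm n r)
  simp only [Function.comp_def, hg.coeff_add_eq hell, summable_const_iff] at horbit
  simpa using horbit

end Vanishing

/-- a Jacobi form of weight `0` and positive index `m` — a holomorphic
function `g : ℍ × ℂ → ℂ` satisfying the Jacobi transformation laws of weight `0` and
index `m`, with an absolutely convergent Fourier expansion
`g(τ,z) = Σ c(n,r) qⁿζʳ` supported on `4nm − r² ≥ 0` — is identically zero. -/
theorem stmt_0 (m : ℤ) (hm : 0 < m) (g : ℂ → ℂ → ℂ)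
    (hol : DifferentiableOn ℂ (fun p : ℂ × ℂ => g p.1 p.2) {p : ℂ × ℂ | 0 < p.1.im})
    (transf₁ : ∀ γ : Matrix.SpecialLinearGroup (Fin 2) ℤ, ∀ τ z : ℂ, 0 < τ.im →
      g ((((γ : Matrix (Fin 2) (Fin 2) ℤ) 0 0 : ℂ) * τ + ((γ : Matrix (Fin 2) (Fin 2) ℤ) 0 1 : ℂ)) /
           (((γ : Matrix (Fin 2) (Fin 2) ℤ) 1 0 : ℂ) * τ + ((γ : Matrix (Fin 2) (Fin 2) ℤ) 1 1 : ℂ)))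
        (z / (((γ : Matrix (Fin 2) (Fin 2) ℤ) 1 0 : ℂ) * τ + ((γ : Matrix (Fin 2) (Fin 2) ℤ) 1 1 : ℂ))) =
      Complex.exp (2 * Real.pi * Complex.I * (m : ℂ) * ((γ : Matrix (Fin 2) (Fin 2) ℤ) 1 0 : ℂ) * z ^ 2 /
          (((γ : Matrix (Fin 2) (Fin 2) ℤ) 1 0 : ℂ) * τ + ((γ : Matrix (Fin 2) (Fin 2) ℤ) 1 1 : ℂ))) *
        g τ z)
    (transf₂ : ∀ lam mu : ℤ, ∀ τ z : ℂ, 0 < τ.im →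
      g τ (z + (lam : ℂ) * τ + (mu : ℂ)) =
        Complex.exp (2 * Real.pi * Complex.I *
            (-(m : ℂ) * (lam : ℂ) ^ 2 * τ - 2 * (m : ℂ) * (lam : ℂ) * z)) * g τ z)
    (c : ℤ × ℤ → ℂ)
    (habs : ∀ τ z : ℂ, 0 < τ.im → Summable (fun p : ℤ × ℤ =>
      ‖c p * Complex.exp (2 * Real.pi * Complex.I * ((p.1 : ℂ) * τ + (p.2 : ℂ) * z))‖))
    (hsum : ∀ τ z : ℂ, 0 < τ.im →
      HasSum (fun p : ℤ × ℤ =>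
        c p * Complex.exp (2 * Real.pi * Complex.I * ((p.1 : ℂ) * τ + (p.2 : ℂ) * z)))
        (g τ z))
    (hsupp : ∀ n r : ℤ, 4 * n * m - r ^ 2 < 0 → c (n, r) = 0) :
    ∀ τ z : ℂ, 0 < τ.im → g τ z = 0 := by
  let G : ℍ → ℂ → ℂ := fun τ ↦ g τ
  have hexp : HasFourierExpansion G c := fun τ z ↦ hsum τ z τ.im_pos
  have hmod : SatisfiesModularLaw m G := by
    intro γ τ z
    have h := transf₁ γ τ z τ.im_pos
    simpa [G, specialLinearGroup_apply, ModularGroup.denom_apply, mul_assoc, mul_div_assoc] using h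
  have hell : SatisfiesEllipticLaw m G := by
    intro l τ z
    have h := transf₂ l 0 τ z τ.im_pos
    simpa [G, fourierMonomial, sub_eq_add_neg] using h
  obtain ⟨C, hC⟩ := hexp.exists_peterssonNorm_le hmod hell hm hsupp
  have hreal (τ : ℍ) (x : ℝ) : ‖G τ x‖ ≤ C := peterssonNorm_ofReal m G τ x ▸ hC τ x
  have hzero := hexp.coeff_eq_zero hell hm.ne' (hexp.summable_sq_norm hreal)
  intro τ z hτ
  exact (hsum τ z hτ).unique (by simpa only [hzero, zero_mul] using hasSum_zero)
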